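/- Let n ≥ 2, x ∈ ℝⁿ \ {0} and r ∈ (0,π]. For every y ∈ ℝⁿ \ {0} with ∠(x,0,y) = r one has p(x,y) = |x−y| / √(|x−y|² + 4|x||y|) ≥ sin(r/2)/√(sin²(r/2)+1), with equality when |y| = |x|. Hence the radius sin(r/2)/√(sin²(r/2)+1) in the inclusion B_p(x, sin(r/2)/√(sin²(r/2)+1)) ⊂ B_v(x,r) is best possible. -/

import Mathlib

/-! The half-angle law of cosines `d² = (a - b)² + (2 √(ab) sin(θ/2))²`, with `a = |x|`, `b = |y|`,
`d = |x - y|`, gives `sin(θ/2) ≤ d / (2 √(ab))`, with equality exactly when `a = b`. The point pair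
function is the value of the increasing function `t ↦ sin (arctan t) = t / √(1 + t²)` at
`d / (2 √(ab))`, and the sharp radius is its value at `sin(θ/2)`. -/

open EuclideanGeometry Real

/-- The point pair function `|x - y| / √(|x - y|² + 4 d(x) d(y))` of the space punctured at `p`,
where the distance `d` to the boundary is the distance to `p`. The puncture is an explicit argument,
and `x`, `y` range over the whole space; at `x = y = p` the value is `0 / 0 = 0`. -/
noncomputable def puncturedPointPair {X : Type*} [PseudoMetricSpace X] (p x y : X) : ℝ :=
  dist x y / √(dist x y ^ 2 + 4 * dist x p * dist y p)

theorem div_sqrt_sq_add_sq_eq_sin_arctan {k : ℝ} (hk : 0 < k) (t : ℝ) :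
    t / √(t ^ 2 + k ^ 2) = sin (arctan (t / k)) := by
  have factor : t ^ 2 + k ^ 2 = k ^ 2 * (1 + (t / k) ^ 2) := by
    field_simp
    ring
  rw [sin_arctan, factor, sqrt_mul (sq_nonneg k), sqrt_sq hk.le, div_div]

theorem puncturedPointPair_eq_sin_arctan {X : Type*} [MetricSpace X] {p x y : X}
    (hx : x ≠ p) (hy : y ≠ p) :
    puncturedPointPair p x y = sin (arctan (dist x y / (2 * √(dist x p * dist y p)))) := by
  have hprod : 0 < dist x p * dist y p := mul_pos (dist_pos.2 hx) (dist_pos.2 hy)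
  rw [← div_sqrt_sq_add_sq_eq_sin_arctan (by positivity), mul_pow, sq_sqrt hprod.le,
    puncturedPointPair]
  norm_num [mul_assoc]

section InnerProductSpace

variable {V P : Type*} [NormedAddCommGroup V] [InnerProductSpace ℝ V] [MetricSpace P]
  [NormedAddTorsor V P]

theorem dist_sq_eq_dist_sub_dist_sq_add_sin_half_angle (p x y : P) :
    dist x y ^ 2 = (dist x p - dist y p) ^ 2 +
      (2 * √(dist x p * dist y p) * sin (∠ x p y / 2)) ^ 2 := by
  have half_angle : sin (∠ x p y / 2) ^ 2 = 1 / 2 - cos (∠ x p y) / 2 := by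
    rw [sin_sq_eq_half_sub, mul_div_cancel₀ _ two_ne_zero]
  rw [mul_pow, mul_pow, sq_sqrt (by positivity), half_angle]
  linarith [law_cos x p y]

theorem sin_half_angle_nonneg (p x y : P) : 0 ≤ sin (∠ x p y / 2) :=
  sin_nonneg_of_nonneg_of_le_pi (by linarith [angle_nonneg x p y])
    (by linarith [angle_nonneg x p y, angle_le_pi x p y])

theorem two_mul_sqrt_mul_sin_half_angle_le_dist (p x y : P) :
    2 * √(dist x p * dist y p) * sin (∠ x p y / 2) ≤ dist x y := by
  refine le_of_sq_le_sq ?_ dist_nonneg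
  rw [dist_sq_eq_dist_sub_dist_sq_add_sin_half_angle p x y]
  exact le_add_of_nonneg_left (sq_nonneg _)

theorem two_mul_sqrt_mul_sin_half_angle_eq_dist_iff (p x y : P) :
    2 * √(dist x p * dist y p) * sin (∠ x p y / 2) = dist x y ↔ dist y p = dist x p := by
  have hsin := sin_half_angle_nonneg p x y
  rw [← sq_eq_sq₀ (by positivity) dist_nonneg,
    dist_sq_eq_dist_sub_dist_sq_add_sin_half_angle p x y, right_eq_add, sq_eq_zero_iff,
    sub_eq_zero, eq_comm]

theorem stmt_15_general {p x y : P} (hx : x ≠ p) (hy : y ≠ p) :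
    sin (∠ x p y / 2) / √(sin (∠ x p y / 2) ^ 2 + 1) ≤ puncturedPointPair p x y ∧
      (puncturedPointPair p x y = sin (∠ x p y / 2) / √(sin (∠ x p y / 2) ^ 2 + 1) ↔
        dist y p = dist x p) := by
  have hscale : 0 < 2 * √(dist x p * dist y p) := by
    have := dist_pos.2 hx
    have := dist_pos.2 hy
    positivity
  rw [puncturedPointPair_eq_sin_arctan hx hy, add_comm _ (1 : ℝ), ← sin_arctan]
  constructor
  · refine sin_arctan_strictMono.monotone ?_
    rw [le_div_iff₀' hscale]
    exact two_mul_sqrt_mul_sin_half_angle_le_dist p x y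
  · rw [sin_arctan_strictMono.injective.eq_iff, div_eq_iff_mul_eq hscale.ne', mul_comm]
    exact two_mul_sqrt_mul_sin_half_angle_eq_dist_iff p x y

end InnerProductSpace

theorem stmt_15 (n : ℕ) (hn : 2 ≤ n) (x : EuclideanSpace ℝ (Fin n)) (hx : x ≠ 0)
    (r : ℝ) (hr : r ∈ Set.Ioc (0:ℝ) Real.pi)
    (y : EuclideanSpace ℝ (Fin n)) (hy : y ≠ 0)
    (hangle : EuclideanGeometry.angle x 0 y = r) :
    Real.sin (r / 2) / Real.sqrt (Real.sin (r / 2) ^ 2 + 1) ≤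
      dist x y / Real.sqrt (dist x y ^ 2 + 4 * ‖x‖ * ‖y‖) ∧
      (‖y‖ = ‖x‖ →
        dist x y / Real.sqrt (dist x y ^ 2 + 4 * ‖x‖ * ‖y‖) =
          Real.sin (r / 2) / Real.sqrt (Real.sin (r / 2) ^ 2 + 1)) := by
  have h := stmt_15_general hx hy
  simp only [hangle, puncturedPointPair, dist_zero_right] at h
  exact h.imp_right Iff.mpr
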